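/- Let S be a topological semigroup with identity. If every subsemigroup of S generated by a finite subset together with the identity is amenable (with the subspace topology), then S is amenable. -/

import Mathlib

open BoundedContinuousFunction MeasureTheory Filter Topology

noncomputable section

namespace Paper

variable {S : Type*} [Semigroup S] [TopologicalSpace S] [ContinuousMul S]

/-- Left translate: `(f·s)(t) = f (s * t)`. -/
def lTrans (f : S →ᵇ ℝ) (s : S) : S →ᵇ ℝ :=
  f.compContinuous ⟨fun t => s * t, continuous_mul_left s⟩

/-- Right translate: `(s·f)(t) = f (t * s)`. -/
def rTrans (f : S →ᵇ ℝ) (s : S) : S →ᵇ ℝ :=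
  f.compContinuous ⟨fun t => t * s, continuous_mul_right s⟩

@[simp] lemma lTrans_apply (f : S →ᵇ ℝ) (s t : S) : lTrans f s t = f (s * t) := rfl
@[simp] lemma rTrans_apply (f : S →ᵇ ℝ) (s t : S) : rTrans f s t = f (t * s) := rfl

variable (S) in
/-- The space of left uniformly continuous bounded functions on `S`. -/
def LUC : Submodule ℝ (S →ᵇ ℝ) where
  carrier := {f | Continuous fun s => lTrans f s}
  add_mem' {f g} hf hg := by
    show Continuous fun s => lTrans (f + g) s
    have h : (fun s => lTrans (f + g) s) = fun s => lTrans f s + lTrans g s := by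
      funext s; ext t; simp
    rw [h]; exact Continuous.add hf hg
  zero_mem' := by
    show Continuous fun s : S => lTrans (0 : S →ᵇ ℝ) s
    have h : (fun s : S => lTrans (0 : S →ᵇ ℝ) s) = fun _ => (0 : S →ᵇ ℝ) := by
      funext s; ext t; simp
    rw [h]; exact continuous_const
  smul_mem' r f hf := by
    show Continuous fun s => lTrans (r • f) s
    have h : (fun s => lTrans (r • f) s) = fun s => r • lTrans f s := by
      funext s; ext t; simp
    rw [h]; exact Continuous.const_smul hf r

variable (S) in
/-- The space of right uniformly continuous bounded functions on `S`. -/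
def RUC : Submodule ℝ (S →ᵇ ℝ) where
  carrier := {f | Continuous fun s => rTrans f s}
  add_mem' {f g} hf hg := by
    show Continuous fun s => rTrans (f + g) s
    have h : (fun s => rTrans (f + g) s) = fun s => rTrans f s + rTrans g s := by
      funext s; ext t; simp
    rw [h]; exact Continuous.add hf hg
  zero_mem' := by
    show Continuous fun s : S => rTrans (0 : S →ᵇ ℝ) s
    have h : (fun s : S => rTrans (0 : S →ᵇ ℝ) s) = fun _ => (0 : S →ᵇ ℝ) := by
      funext s; ext t; simp
    rw [h]; exact continuous_const
  smul_mem' r f hf := by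
    show Continuous fun s => rTrans (r • f) s
    have h : (fun s => rTrans (r • f) s) = fun s => r • rTrans f s := by
      funext s; ext t; simp
    rw [h]; exact Continuous.const_smul hf r

lemma mem_LUC_iff {f : S →ᵇ ℝ} : f ∈ LUC S ↔ Continuous fun s => lTrans f s := Iff.rfl

lemma mem_RUC_iff {f : S →ᵇ ℝ} : f ∈ RUC S ↔ Continuous fun s => rTrans f s := Iff.rfl

lemma one_mem_LUC : (1 : S →ᵇ ℝ) ∈ LUC S := by
  rw [mem_LUC_iff]
  have h : (fun s : S => lTrans (1 : S →ᵇ ℝ) s) = fun _ => (1 : S →ᵇ ℝ) := by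
    funext s; ext t; simp
  rw [h]; exact continuous_const

lemma one_mem_RUC : (1 : S →ᵇ ℝ) ∈ RUC S := by
  rw [mem_RUC_iff]
  have h : (fun s : S => rTrans (1 : S →ᵇ ℝ) s) = fun _ => (1 : S →ᵇ ℝ) := by
    funext s; ext t; simp
  rw [h]; exact continuous_const

lemma mul_mem_LUC {f g : S →ᵇ ℝ} (hf : f ∈ LUC S) (hg : g ∈ LUC S) : f * g ∈ LUC S := by
  rw [mem_LUC_iff] at *
  have h : (fun s => lTrans (f * g) s) = fun s => lTrans f s * lTrans g s := by
    funext s; ext t; simp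
  rw [h]; exact Continuous.mul hf hg

lemma mul_mem_RUC {f g : S →ᵇ ℝ} (hf : f ∈ RUC S) (hg : g ∈ RUC S) : f * g ∈ RUC S := by
  rw [mem_RUC_iff] at *
  have h : (fun s => rTrans (f * g) s) = fun s => rTrans f s * rTrans g s := by
    funext s; ext t; simp
  rw [h]; exact Continuous.mul hf hg

lemma lTrans_mem {f : S →ᵇ ℝ} (hf : f ∈ LUC S) (s : S) : lTrans f s ∈ LUC S := by
  rw [mem_LUC_iff] at *
  have h : (fun t => lTrans (lTrans f s) t) = fun t => lTrans f (s * t) := by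
    funext t; ext u; simp [mul_assoc]
  rw [h]; exact hf.comp (continuous_mul_left s)

lemma rTrans_mem {f : S →ᵇ ℝ} (hf : f ∈ RUC S) (s : S) : rTrans f s ∈ RUC S := by
  rw [mem_RUC_iff] at *
  have h : (fun t => rTrans (rTrans f s) t) = fun t => rTrans f (t * s) := by
    funext t; ext u; simp [mul_assoc]
  rw [h]; exact hf.comp (continuous_mul_right s)

variable (S) in
/-- `I` is a left invariant mean on `LUC S`. -/
def IsLeftInvariantMean (I : LUC S →ₗ[ℝ] ℝ) : Prop :=
  I ⟨1, one_mem_LUC⟩ = 1 ∧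
  (∀ f : LUC S, 0 ≤ (f : S →ᵇ ℝ) → 0 ≤ I f) ∧
  ∀ (f : S →ᵇ ℝ) (hf : f ∈ LUC S) (s : S),
    I ⟨lTrans f s, lTrans_mem hf s⟩ = I ⟨f, hf⟩

variable (S) in
/-- `I` is a right invariant mean on `RUC S`. -/
def IsRightInvariantMean (I : RUC S →ₗ[ℝ] ℝ) : Prop :=
  I ⟨1, one_mem_RUC⟩ = 1 ∧
  (∀ f : RUC S, 0 ≤ (f : S →ᵇ ℝ) → 0 ≤ I f) ∧
  ∀ (f : S →ᵇ ℝ) (hf : f ∈ RUC S) (s : S),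
    I ⟨rTrans f s, rTrans_mem hf s⟩ = I ⟨f, hf⟩

variable (S) in
def LeftAmenable : Prop := ∃ I : LUC S →ₗ[ℝ] ℝ, IsLeftInvariantMean S I

variable (S) in
def RightAmenable : Prop := ∃ I : RUC S →ₗ[ℝ] ℝ, IsRightInvariantMean S I

variable (S) in
/-- A topological semigroup is amenable if `LUC` admits a left invariant mean and
`RUC` admits a right invariant mean. -/
def Amenable : Prop := LeftAmenable S ∧ RightAmenable S

variable (S) in
/-- `I` is a multiplicative left invariant mean on `LUC S`. -/
def IsMultLeftInvariantMean (I : LUC S →ₗ[ℝ] ℝ) : Prop :=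
  IsLeftInvariantMean S I ∧
  ∀ (f g : S →ᵇ ℝ) (hf : f ∈ LUC S) (hg : g ∈ LUC S),
    I ⟨f * g, mul_mem_LUC hf hg⟩ = I ⟨f, hf⟩ * I ⟨g, hg⟩

variable (S) in
def IsMultRightInvariantMean (I : RUC S →ₗ[ℝ] ℝ) : Prop :=
  IsRightInvariantMean S I ∧
  ∀ (f g : S →ᵇ ℝ) (hf : f ∈ RUC S) (hg : g ∈ RUC S),
    I ⟨f * g, mul_mem_RUC hf hg⟩ = I ⟨f, hf⟩ * I ⟨g, hg⟩

variable (S) in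
def ExtremelyLeftAmenable : Prop := ∃ I : LUC S →ₗ[ℝ] ℝ, IsMultLeftInvariantMean S I

variable (S) in
def ExtremelyRightAmenable : Prop := ∃ I : RUC S →ₗ[ℝ] ℝ, IsMultRightInvariantMean S I

variable (S) in
def ExtremelyAmenable : Prop := ExtremelyLeftAmenable S ∧ ExtremelyRightAmenable S


/-- Limit of a net of means along an ultrafilter. -/
lemma exists_limit_mean {X : Type*} [TopologicalSpace X] (V : Submodule ℝ (X →ᵇ ℝ))
    (h1 : (1 : X →ᵇ ℝ) ∈ V) {ι : Type*} [Preorder ι] [IsDirectedOrder ι] [Nonempty ι]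
    (J : ι → V →ₗ[ℝ] ℝ) (J1 : ∀ i, J i ⟨1, h1⟩ = 1)
    (Jp : ∀ i (f : V), 0 ≤ (f : X →ᵇ ℝ) → 0 ≤ J i f) :
    ∃ I : V →ₗ[ℝ] ℝ, I ⟨1, h1⟩ = 1 ∧ (∀ f : V, 0 ≤ (f : X →ᵇ ℝ) → 0 ≤ I f) ∧
      ∀ f g : V, (∀ᶠ i in atTop, J i f = J i g) → I f = I g := by
  let U : Ultrafilter ι := Ultrafilter.of atTop
  have hU : (U : Filter ι) ≤ atTop := Ultrafilter.of_le _
  have hlim : ∀ f : V, ∃ x, Tendsto (fun i => J i f) U (𝓝 x) := by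
    intro f
    have hb : ∀ i, J i f ∈ Set.Icc (-‖(f : X →ᵇ ℝ)‖) ‖(f : X →ᵇ ℝ)‖ := by
      intro i
      have a1 := Jp i (‖(f : X →ᵇ ℝ)‖ • (⟨1, h1⟩ : V) + (-1 : ℝ) • f) (by
        intro x
        have := (abs_le.1 ((f : X →ᵇ ℝ).norm_coe_le_norm x)).2
        have h2 : 0 ≤ ‖(f : X →ᵇ ℝ)‖ + -(f : X →ᵇ ℝ) x := by linarith
        simpa using h2)
      have a2 := Jp i (‖(f : X →ᵇ ℝ)‖ • (⟨1, h1⟩ : V) + f) (by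
        intro x
        have := (abs_le.1 ((f : X →ᵇ ℝ).norm_coe_le_norm x)).1
        have h2 : 0 ≤ ‖(f : X →ᵇ ℝ)‖ + (f : X →ᵇ ℝ) x := by linarith
        simpa using h2)
      rw [LinearMap.map_add, LinearMap.map_smul, LinearMap.map_smul, J1, smul_eq_mul, mul_one, smul_eq_mul] at a1
      rw [LinearMap.map_add, LinearMap.map_smul, J1, smul_eq_mul, mul_one] at a2
      exact ⟨by linarith, by linarith⟩
    obtain ⟨x, -, hx⟩ := (isCompact_Icc (a := -‖(f : X →ᵇ ℝ)‖)
      (b := ‖(f : X →ᵇ ℝ)‖)).ultrafilter_le_nhds (U.map fun i => J i f) (by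
        rw [le_principal_iff]
        exact Filter.mem_map.2 (Filter.univ_mem' hb))
    exact ⟨x, hx⟩
  choose L hL using hlim
  refine ⟨{ toFun := L, map_add' := ?_, map_smul' := ?_ }, ?_, ?_, ?_⟩
  · intro f g
    refine tendsto_nhds_unique (hL (f + g)) ?_
    simpa using (hL f).add (hL g)
  · intro r f
    refine tendsto_nhds_unique (hL (r • f)) ?_
    simpa using (hL f).const_mul r
  · refine tendsto_nhds_unique (hL _) ?_
    simp [J1]
  · intro f hf
    exact ge_of_tendsto' (hL f) (fun i => Jp i f hf)
  · intro f g hfg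
    exact tendsto_nhds_unique (hL f) ((hL g).congr' ((hfg.filter_mono hU).mono fun i hi => hi.symm))

/-- Restriction to a subsemigroup. -/
def resB (T : Subsemigroup S) : (S →ᵇ ℝ) →ₗ[ℝ] (T →ᵇ ℝ) where
  toFun f := f.compContinuous ⟨Subtype.val, continuous_subtype_val⟩
  map_add' _ _ := rfl
  map_smul' _ _ := rfl

lemma resB_LUC (T : Subsemigroup S) (f : S →ᵇ ℝ) (hf : f ∈ LUC S) : resB T f ∈ LUC T := by
  rw [mem_LUC_iff] at *
  have hc : Continuous fun g : S →ᵇ ℝ => resB T g :=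
    BoundedContinuousFunction.continuous_compContinuous _
  exact hc.comp (hf.comp continuous_subtype_val)

lemma resB_RUC (T : Subsemigroup S) (f : S →ᵇ ℝ) (hf : f ∈ RUC S) : resB T f ∈ RUC T := by
  rw [mem_RUC_iff] at *
  have hc : Continuous fun g : S →ᵇ ℝ => resB T g :=
    BoundedContinuousFunction.continuous_compContinuous _
  exact hc.comp (hf.comp continuous_subtype_val)

/-- Corollary 4.8: if every finitely generated subsemigroup (with identity) of a
topological semigroup `S` is amenable, then `S` is amenable. -/
theorem amenable_of_finitely_generated_amenable
    {S : Type*} [Monoid S] [TopologicalSpace S] [ContinuousMul S]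
    (h : ∀ F : Finset S, Amenable ↥(Subsemigroup.closure (insert (1 : S) (F : Set S)))) :
    Amenable S := by
  classical
  have hmem : ∀ s : S, ∀ᶠ F : Finset S in atTop,
      s ∈ Subsemigroup.closure (insert (1 : S) (F : Set S)) := by
    intro s
    filter_upwards [eventually_ge_atTop ({s} : Finset S)] with F hF
    exact Subsemigroup.subset_closure (Or.inr (hF (Finset.mem_singleton_self s)))
  constructor
  · choose I hI using fun F => (h F).1
    obtain ⟨L, a, b, c⟩ := exists_limit_mean (LUC S) one_mem_LUC
      (fun F => (I F).comp ((resB _).restrict (resB_LUC _)))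
      (fun F => (hI F).1) (fun F f hf => (hI F).2.1 _ (fun x => hf x.1))
    refine ⟨L, a, b, fun f hf s => c _ _ ?_⟩
    filter_upwards [hmem s] with F hF
    exact (hI F).2.2 (resB _ f) (resB_LUC _ f hf) ⟨s, hF⟩
  · choose I hI using fun F => (h F).2
    obtain ⟨L, a, b, c⟩ := exists_limit_mean (RUC S) one_mem_RUC
      (fun F => (I F).comp ((resB _).restrict (resB_RUC _)))
      (fun F => (hI F).1) (fun F f hf => (hI F).2.1 _ (fun x => hf x.1))
    refine ⟨L, a, b, fun f hf s => c _ _ ?_⟩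
    filter_upwards [hmem s] with F hF
    exact (hI F).2.2 (resB _ f) (resB_RUC _ f hf) ⟨s, hF⟩

end Paper
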